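/- Let 0 < c < 1 be a real constant and k ≥ 1 an integer. For any finite simple graph G of order n with minimum degree δ such that k ≤ (1−c)·ln δ, the k-tuple domination number satisfies the strict inequality γ_{×k}(G) < (ln δ/(δ+1) + k/δ^{0.5·c²}) · n. -/

import Mathlib

/-!
Choose `X` at random, each vertex independently with probability `p = log δ / (δ + 1)`, and repair
it: every `v` whose closed neighbourhood `N` meets `X` in `m < k` vertices adds `k - m` more
vertices of `N`. Put `q = exp (-c)`. The repair at `v` costs at most `k * q ^ m / q ^ k`, and since
`q ^ m` is a product over the vertices of `N`, its expectation is `(1 - p * (1 - q)) ^ #N`, which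
is at most `exp (-(log δ * (1 - q)))`. The strict inequality comes from
`exp (-c) < 1 - c + c ^ 2 / 2`.
-/

open Finset Real

/-- The k-tuple domination number: the minimum cardinality of a set X such that every
vertex has at least k members of X in its closed neighbourhood. -/
noncomputable def kTupleDomNum {V : Type*} [Fintype V] [DecidableEq V]
    (G : SimpleGraph V) [DecidableRel G.Adj] (k : ℕ) : ℕ :=
  sInf {m : ℕ | ∃ X : Finset V,
    (∀ v, k ≤ ((insert v (G.neighborFinset v)) ∩ X).card) ∧ m = X.card}

section BernoulliWeight

variable {V R : Type*} [Fintype V] [DecidableEq V] [CommRing R]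

/-- The probability that a random subset of `V`, containing each element independently with
probability `p`, is equal to `X`. Expectations over random subsets are sums against this weight. -/
def bernoulliWeight (p : R) (X : Finset V) : R :=
  p ^ #X * (1 - p) ^ #Xᶜ

lemma bernoulliWeight_nonneg [PartialOrder R] [IsOrderedRing R] {p : R} (hp₀ : 0 ≤ p) (hp₁ : p ≤ 1)
    (X : Finset V) : 0 ≤ bernoulliWeight p X :=
  mul_nonneg (pow_nonneg hp₀ _) (pow_nonneg (sub_nonneg.2 hp₁) _)

lemma sum_bernoulliWeight_mul_prod (p : R) (f : V → R) :
    ∑ X, bernoulliWeight p X * ∏ v ∈ X, f v = ∏ v, (p * f v + (1 - p)) := by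
  rw [prod_add, powerset_univ]
  refine sum_congr rfl fun X _ ↦ ?_
  rw [prod_mul_distrib, prod_const, prod_const, ← compl_eq_univ_sdiff, bernoulliWeight]
  ring

lemma sum_bernoulliWeight_mul_pow_card_inter (p q : R) (S : Finset V) :
    ∑ X, bernoulliWeight p X * q ^ #(S ∩ X) = (1 - p * (1 - q)) ^ #S := by
  calc ∑ X, bernoulliWeight p X * q ^ #(S ∩ X)
      = ∑ X, bernoulliWeight p X * ∏ v ∈ X, if v ∈ S then q else 1 := by
        simp only [prod_ite_mem, prod_const, inter_comm]
    _ = ∏ v, (p * (if v ∈ S then q else 1) + (1 - p)) := sum_bernoulliWeight_mul_prod p _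
    _ = ∏ v, if v ∈ S then 1 - p * (1 - q) else 1 :=
        prod_congr rfl fun v _ ↦ by split_ifs <;> ring
    _ = (1 - p * (1 - q)) ^ #S := by rw [prod_ite_mem, univ_inter, prod_const]

lemma sum_bernoulliWeight (p : R) : ∑ X : Finset V, bernoulliWeight p X = 1 := by
  simpa using sum_bernoulliWeight_mul_prod p fun _ : V ↦ 1

lemma sum_bernoulliWeight_filter_mem (p : R) (v : V) :
    ∑ X : Finset V with v ∈ X, bernoulliWeight p X = p := by
  -- `0 ^ #({v} ∩ X)` is the indicator of `v ∉ X`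
  have h_notMem : ∑ X : Finset V with v ∉ X, bernoulliWeight p X = 1 - p := by
    simpa [sum_filter, zero_pow_eq, ← disjoint_iff_inter_eq_empty] using
      sum_bernoulliWeight_mul_pow_card_inter p 0 {v}
  have h_split := sum_filter_add_sum_filter_not univ (v ∈ ·) (bernoulliWeight (V := V) p)
  rw [h_notMem, sum_bernoulliWeight] at h_split
  linear_combination h_split

lemma sum_bernoulliWeight_mul_card (p : R) :
    ∑ X : Finset V, bernoulliWeight p X * #X = Fintype.card V * p := by
  calc ∑ X : Finset V, bernoulliWeight p X * #X
      = ∑ X : Finset V, ∑ v, if v ∈ X then bernoulliWeight p X else 0 := by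
        simp [mul_comm]
    _ = ∑ v : V, ∑ X with v ∈ X, bernoulliWeight p X := by
        simp only [sum_filter, sum_comm (s := (univ : Finset V))]
    _ = Fintype.card V * p := by
        simp only [sum_bernoulliWeight_filter_mem, sum_const, card_univ, nsmul_eq_mul]

end BernoulliWeight

lemma exists_le_sum_bernoulliWeight_mul {V R : Type*} [Fintype V] [DecidableEq V] [CommRing R]
    [LinearOrder R] [IsOrderedRing R] {p : R} (hp₀ : 0 ≤ p) (hp₁ : p ≤ 1)
    (f : Finset V → R) : ∃ X, f X ≤ ∑ Y, bernoulliWeight p Y * f Y := by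
  obtain ⟨X, hX⟩ := Finite.exists_min f
  refine ⟨X, ?_⟩
  calc f X = ∑ Y : Finset V, bernoulliWeight p Y * f X := by
        rw [← sum_mul, sum_bernoulliWeight, one_mul]
    _ ≤ ∑ Y, bernoulliWeight p Y * f Y := sum_le_sum fun Y _ ↦
        mul_le_mul_of_nonneg_left (hX Y) (bernoulliWeight_nonneg hp₀ hp₁ Y)

lemma exists_le_card_inter_and_card_le_add_sum_tsub {V ι : Type*} [DecidableEq V] [Fintype ι]
    {N : ι → Finset V} {k : ι → ℕ} (hN : ∀ i, k i ≤ #(N i)) (X : Finset V) :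
    ∃ Y, (∀ i, k i ≤ #(N i ∩ Y)) ∧ #Y ≤ #X + ∑ i, (k i - #(N i ∩ X)) := by
  have h_repair (i : ι) : ∃ A ⊆ N i \ X, #A = k i - #(N i ∩ X) := by
    apply exists_subset_card_eq
    have := card_sdiff_add_card_inter (N i) X
    have := hN i
    omega
  choose A hA_sub hA_card using h_repair
  refine ⟨X ∪ univ.biUnion A, fun i ↦ ?_, ?_⟩
  · have h_disj : Disjoint (N i ∩ X) (A i) :=
      disjoint_of_subset_right (hA_sub i) (disjoint_sdiff_inter (N i) X).symm
    calc k i ≤ #(N i ∩ X) + #(A i) := by rw [hA_card]; omega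
      _ = #(N i ∩ X ∪ A i) := (card_union_of_disjoint h_disj).symm
      _ ≤ #(N i ∩ (X ∪ univ.biUnion A)) := by
        refine card_le_card (union_subset ?_ (subset_inter ?_ ?_))
        · exact inter_subset_inter_left subset_union_left
        · exact (hA_sub i).trans sdiff_subset
        · exact (subset_biUnion_of_mem A (mem_univ i)).trans subset_union_right
  · calc #(X ∪ univ.biUnion A) ≤ #X + ∑ i, #(A i) :=
          (card_union_le _ _).trans (Nat.add_le_add_left card_biUnion_le _)
      _ = #X + ∑ i, (k i - #(N i ∩ X)) := by simp only [hA_card]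

section RandomRepair

variable {V ι K : Type*} [Fintype V] [DecidableEq V] [Fintype ι]
  [Field K] [LinearOrder K] [IsStrictOrderedRing K] {p q : K}

lemma natCast_tsub_le_mul_pow_div_pow (hq₀ : 0 < q) (hq₁ : q ≤ 1) (k m : ℕ) :
    ((k - m : ℕ) : K) ≤ k * q ^ m / q ^ k := by
  rcases le_total k m with hkm | hmk
  · rw [Nat.sub_eq_zero_of_le hkm, Nat.cast_zero]
    positivity
  · calc ((k - m : ℕ) : K) ≤ k := Nat.cast_le.2 (Nat.sub_le k m)
      _ ≤ k * (q ^ m / q ^ k) := le_mul_of_one_le_right k.cast_nonneg <|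
        (one_le_div₀ (by positivity)).2 (pow_le_pow_of_le_one hq₀.le hq₁ hmk)
      _ = k * q ^ m / q ^ k := (mul_div_assoc _ _ _).symm

lemma exists_le_card_inter_and_card_le {N : ι → Finset V} {k : ι → ℕ} (hN : ∀ i, k i ≤ #(N i))
    (hp₀ : 0 ≤ p) (hp₁ : p ≤ 1) (hq₀ : 0 < q) (hq₁ : q ≤ 1) :
    ∃ Y, (∀ i, k i ≤ #(N i ∩ Y)) ∧
      (#Y : K) ≤ Fintype.card V * p + ∑ i, k i / q ^ k i * (1 - p * (1 - q)) ^ #(N i) := by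
  obtain ⟨X, hX⟩ := exists_le_sum_bernoulliWeight_mul hp₀ hp₁
    fun X : Finset V ↦ (#X : K) + ∑ i, k i * q ^ #(N i ∩ X) / q ^ k i
  obtain ⟨Y, hYN, hYX⟩ := exists_le_card_inter_and_card_le_add_sum_tsub hN X
  refine ⟨Y, hYN, ?_⟩
  calc (#Y : K) ≤ #X + ∑ i, ((k i - #(N i ∩ X) : ℕ) : K) := mod_cast hYX
    _ ≤ #X + ∑ i, k i * q ^ #(N i ∩ X) / q ^ k i := by
        gcongr
        exact natCast_tsub_le_mul_pow_div_pow hq₀ hq₁ _ _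
    _ ≤ ∑ X, bernoulliWeight p X * (#X + ∑ i, k i * q ^ #(N i ∩ X) / q ^ k i) := hX
    _ = Fintype.card V * p +
        ∑ i, k i / q ^ k i * ∑ X, bernoulliWeight p X * q ^ #(N i ∩ X) := by
        simp only [mul_add, sum_add_distrib, sum_bernoulliWeight_mul_card, mul_sum]
        rw [sum_comm]
        congr! 3
        ring
    _ = Fintype.card V * p + ∑ i, k i / q ^ k i * (1 - p * (1 - q)) ^ #(N i) := by
        simp only [sum_bernoulliWeight_mul_pow_card_inter]

end RandomRepair

section Graph

variable {V : Type*} [Fintype V] [DecidableEq V] (G : SimpleGraph V) [DecidableRel G.Adj]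

lemma minDegree_add_one_le_card_insert_neighborFinset (v : V) :
    G.minDegree + 1 ≤ #(insert v (G.neighborFinset v)) := by
  rw [card_insert_of_notMem (G.notMem_neighborFinset_self v), G.card_neighborFinset_eq_degree]
  exact Nat.add_le_add_right (G.minDegree_le_degree v) 1

lemma kTupleDomNum_le {K : Type*} [Field K] [LinearOrder K] [IsStrictOrderedRing K] {p q : K}
    {k : ℕ} (hk : k ≤ G.minDegree + 1) (hp₀ : 0 ≤ p) (hp₁ : p ≤ 1) (hq₀ : 0 < q) (hq₁ : q ≤ 1) :
    (kTupleDomNum G k : K) ≤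
      (p + k / q ^ k * (1 - p * (1 - q)) ^ (G.minDegree + 1)) * Fintype.card V := by
  have hN := minDegree_add_one_le_card_insert_neighborFinset G
  obtain ⟨Y, hY, hY_card⟩ :=
    exists_le_card_inter_and_card_le (fun v ↦ hk.trans (hN v)) hp₀ hp₁ hq₀ hq₁
  have h_base₀ : 0 ≤ 1 - p * (1 - q) :=
    sub_nonneg.2 (mul_le_one₀ hp₁ (sub_nonneg.2 hq₁) (sub_le_self 1 hq₀.le))
  have h_base₁ : 1 - p * (1 - q) ≤ 1 := sub_le_self 1 (mul_nonneg hp₀ (sub_nonneg.2 hq₁))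
  calc (kTupleDomNum G k : K) ≤ #Y := Nat.cast_le.2 (Nat.sInf_le ⟨Y, hY, rfl⟩)
    _ ≤ Fintype.card V * p +
        ∑ v, k / q ^ k * (1 - p * (1 - q)) ^ #(insert v (G.neighborFinset v)) := hY_card
    _ ≤ Fintype.card V * p +
        ∑ _v : V, k / q ^ k * (1 - p * (1 - q)) ^ (G.minDegree + 1) := by
        gcongr _ + ∑ v, _ * ?_ with v
        exact pow_le_pow_of_le_one h_base₀ h_base₁ (hN v)
    _ = _ := by
        rw [sum_const, card_univ, nsmul_eq_mul]
        ring

end Graph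

lemma exp_neg_lt_one_sub_add_sq_div_two {c : ℝ} (hc : 0 < c) : exp (-c) < 1 - c + c ^ 2 / 2 := by
  have h_pos : 0 < 1 - c + c ^ 2 / 2 := by nlinarith [sq_nonneg (c - 1)]
  rw [exp_neg, inv_lt_iff_one_lt_mul₀ (exp_pos c)]
  calc 1 < 1 + c ^ 4 / 4 := lt_add_of_pos_right 1 (by positivity)
    _ = (1 - c + c ^ 2 / 2) * (1 + c + c ^ 2 / 2) := by ring
    _ ≤ (1 - c + c ^ 2 / 2) * exp c := by
        gcongr
        exact quadratic_le_exp_of_nonneg hc.le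

lemma exp_neg_div_exp_neg_pow_lt {c L : ℝ} {k : ℕ} (hc : 0 < c) (hL : 0 < L)
    (hk : k ≤ (1 - c) * L) :
    exp (-(L * (1 - exp (-c)))) / exp (-c) ^ k < exp (-(L * (c ^ 2 / 2))) := by
  rw [← exp_nat_mul, ← exp_sub, exp_lt_exp]
  calc -(L * (1 - exp (-c))) - k * -c = c * k + L * exp (-c) - L := by ring
    _ ≤ c * ((1 - c) * L) + L * exp (-c) - L := by gcongr
    _ < c * ((1 - c) * L) + L * (1 - c + c ^ 2 / 2) - L := by
        gcongr
        exact exp_neg_lt_one_sub_add_sq_div_two hc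
    _ = -(L * (c ^ 2 / 2)) := by ring

lemma one_sub_log_div_mul_pow_lt {c : ℝ} {k d : ℕ} (hc : 0 < c) (hd : 0 < log d)
    (hk : k ≤ (1 - c) * log d) :
    (1 - log d / (d + 1) * (1 - exp (-c))) ^ (d + 1) / exp (-c) ^ k <
      ((d : ℝ) ^ (0.5 * c ^ 2))⁻¹ := by
  have hd₀ : (0 : ℝ) < d := d.cast_nonneg.lt_of_ne' fun h ↦ by simp [h] at hd
  have h_le : log d * (1 - exp (-c)) ≤ ((d + 1 : ℕ) : ℝ) := by
    calc log d * (1 - exp (-c)) ≤ log d := mul_le_of_le_one_right hd.le (by linarith [exp_pos (-c)])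
      _ ≤ d := log_le_self d.cast_nonneg
      _ ≤ ((d + 1 : ℕ) : ℝ) := Nat.cast_le.2 d.le_succ
  calc _ = (1 - log d * (1 - exp (-c)) / ((d + 1 : ℕ) : ℝ)) ^ (d + 1) / exp (-c) ^ k := by
        rw [Nat.cast_succ, div_mul_eq_mul_div]
    _ ≤ exp (-(log d * (1 - exp (-c)))) / exp (-c) ^ k := by
        gcongr
        exact one_sub_div_pow_le_exp_neg h_le
    _ < exp (-(log d * (c ^ 2 / 2))) := exp_neg_div_exp_neg_pow_lt hc hd hk
    _ = ((d : ℝ) ^ (0.5 * c ^ 2))⁻¹ := by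
        rw [rpow_def_of_pos hd₀, ← exp_neg]
        ring_nf

theorem k_tuple_domination_ln_threshold_bound
    {V : Type*} [Fintype V] [DecidableEq V]
    (G : SimpleGraph V) [DecidableRel G.Adj]
    (n : ℕ) (hn : n = Fintype.card V)
    (δ : ℕ) (hδ : δ = G.minDegree)
    (c : ℝ) (hc0 : 0 < c) (hc1 : c < 1)
    (k : ℕ) (hk : 1 ≤ k)
    (hkδ : (k : ℝ) ≤ (1 - c) * Real.log δ) :
    (kTupleDomNum G k : ℝ) <
      (Real.log δ / ((δ : ℝ) + 1) + (k : ℝ) / (δ : ℝ) ^ (0.5 * c ^ 2)) * n := by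
  have hk₀ : (0 : ℝ) < k := Nat.cast_pos.2 hk
  have h_log : 0 < log δ := pos_of_mul_pos_right (hk₀.trans_le hkδ) (sub_nonneg.2 hc1.le)
  have h_log_le : log δ ≤ δ := log_le_self δ.cast_nonneg
  have hk_le : k ≤ δ := Nat.cast_le.1 <|
    hkδ.trans <| (mul_le_of_le_one_left h_log.le (sub_le_self 1 hc0.le)).trans h_log_le
  have hn₀ : (0 : ℝ) < n := by
    rcases isEmpty_or_nonempty V with _ | _
    · rw [G.minDegree_of_subsingleton] at hδ
      omega
    · exact hn ▸ Nat.cast_pos.2 Fintype.card_pos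
  have h_dom := kTupleDomNum_le G (p := log δ / (δ + 1)) (q := exp (-c))
    (hδ ▸ hk_le.trans δ.le_succ) (by positivity) ((div_le_one₀ (by positivity)).2 (by linarith))
    (exp_pos _) (exp_le_one_iff.2 (by linarith))
  rw [← hn, ← hδ, div_mul_eq_mul_div, mul_div_assoc] at h_dom
  refine h_dom.trans_lt ?_
  gcongr
  exact mul_lt_mul_of_pos_left (one_sub_log_div_mul_pow_lt hc0 h_log hkδ) hk₀
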